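/- arXiv:1803.04568 — 2 statements merged into one kernel-verified Lean document; each statement's English description precedes it below -/
import Mathlib

section
/- Let B = B(0,1) be the open unit ball in ℝ². There is no constant C such that for every function f ∈ C_0^∞(B) one has ‖∂_x² f‖_{L¹} ≤ C(‖f‖_∞ + ‖∇f‖_∞ + ‖Δf‖_{L¹}). -/
open MeasureTheory Real

noncomputable section

/-- First partial derivative (with respect to the first coordinate) on `ℝ²`. -/
def pd1 (f : ℝ × ℝ → ℝ) (p : ℝ × ℝ) : ℝ := fderiv ℝ f p (1, 0)

/-- Second partial derivative (with respect to the second coordinate) on `ℝ²`. -/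
def pd2 (f : ℝ × ℝ → ℝ) (p : ℝ × ℝ) : ℝ := fderiv ℝ f p (0, 1)

/-- Euclidean magnitude of a vector in `ℝ²`. -/
def emag (v : ℝ × ℝ) : ℝ := Real.sqrt (v.1 ^ 2 + v.2 ^ 2)

/-- The open Euclidean unit ball `B(0,1)` in `ℝ²`. -/
def uball : Set (ℝ × ℝ) := {p : ℝ × ℝ | p.1 ^ 2 + p.2 ^ 2 < 1}

lemma pd1_eq {f : ℝ × ℝ → ℝ} {p : ℝ × ℝ} {d : ℝ} (hf : DifferentiableAt ℝ f p)
    (h : HasDerivAt (fun x => f (x, p.2)) d p.1) : pd1 f p = d := by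
  have h1 : HasDerivAt (fun x : ℝ => ((x, p.2) : ℝ × ℝ)) (1, 0) p.1 :=
    (hasDerivAt_id p.1).prodMk (hasDerivAt_const p.1 p.2)
  have h2 : HasFDerivAt f (fderiv ℝ f p) ((fun x : ℝ => ((x, p.2) : ℝ × ℝ)) p.1) :=
    hf.hasFDerivAt
  exact (h2.comp_hasDerivAt p.1 h1).unique h

lemma pd2_eq {f : ℝ × ℝ → ℝ} {p : ℝ × ℝ} {d : ℝ} (hf : DifferentiableAt ℝ f p)
    (h : HasDerivAt (fun y => f (p.1, y)) d p.2) : pd2 f p = d := by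
  have h1 : HasDerivAt (fun x : ℝ => ((p.1, x) : ℝ × ℝ)) (0, 1) p.2 :=
    (hasDerivAt_const p.2 p.1).prodMk (hasDerivAt_id p.2)
  have h2 : HasFDerivAt f (fderiv ℝ f p) ((fun x : ℝ => ((p.1, x) : ℝ × ℝ)) p.2) :=
    hf.hasFDerivAt
  exact (h2.comp_hasDerivAt p.2 h1).unique h

lemma pd1_contDiff {f : ℝ × ℝ → ℝ} (hf : ContDiff ℝ (⊤ : ℕ∞) f) :
    ContDiff ℝ (⊤ : ℕ∞) (pd1 f) :=
  (hf.fderiv_right (m := (⊤ : ℕ∞)) (by simp)).clm_apply contDiff_const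

lemma pd2_contDiff {f : ℝ × ℝ → ℝ} (hf : ContDiff ℝ (⊤ : ℕ∞) f) :
    ContDiff ℝ (⊤ : ℕ∞) (pd2 f) :=
  (hf.fderiv_right (m := (⊤ : ℕ∞)) (by simp)).clm_apply contDiff_const

lemma ts_pd1 (f : ℝ × ℝ → ℝ) : tsupport (pd1 f) ⊆ tsupport f := by
  refine closure_minimal (fun p hp => ?_) (isClosed_tsupport f)
  apply support_fderiv_subset ℝ
  intro h
  apply hp
  simp [pd1, h]

lemma ts_pd2 (f : ℝ × ℝ → ℝ) : tsupport (pd2 f) ⊆ tsupport f := by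
  refine closure_minimal (fun p hp => ?_) (isClosed_tsupport f)
  apply support_fderiv_subset ℝ
  intro h
  apply hp
  simp [pd2, h]

lemma cs_of_ts {f g : ℝ × ℝ → ℝ} (hf : HasCompactSupport f) (h : tsupport g ⊆ tsupport f) :
    HasCompactSupport g := IsCompact.of_isClosed_subset hf (isClosed_tsupport g) h

lemma diff_of_cd {f : ℝ × ℝ → ℝ} (hf : ContDiff ℝ (⊤ : ℕ∞) f) : Differentiable ℝ f :=
  hf.differentiable (by simp)

/-- scaled translate -/
def sc (a t : ℝ) (c : ℝ × ℝ) (g : ℝ × ℝ → ℝ) : ℝ × ℝ → ℝ := fun p => a * g (t • (p - c))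

lemma sc_contDiff {g : ℝ × ℝ → ℝ} (hg : ContDiff ℝ (⊤ : ℕ∞) g) (a t : ℝ) (c : ℝ × ℝ) :
    ContDiff ℝ (⊤ : ℕ∞) (sc a t c g) := by
  unfold sc
  fun_prop

lemma fderiv_sc {g : ℝ × ℝ → ℝ} (hg : Differentiable ℝ g) (a t : ℝ) (c p v : ℝ × ℝ) :
    fderiv ℝ (sc a t c g) p v = (a * t) * fderiv ℝ g (t • (p - c)) v := by
  have h1 : HasFDerivAt (fun p : ℝ × ℝ => t • (p - c)) (t • ContinuousLinearMap.id ℝ (ℝ × ℝ)) p :=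
    ((hasFDerivAt_id p).sub_const c).const_smul t
  have h2 := ((hg (t • (p - c))).hasFDerivAt.comp p h1).const_mul a
  have h3 : fderiv ℝ (sc a t c g) p = _ := h2.fderiv
  rw [h3]
  simp
  ring

lemma pd1_sc {g : ℝ × ℝ → ℝ} (hg : Differentiable ℝ g) (a t : ℝ) (c : ℝ × ℝ) :
    pd1 (sc a t c g) = sc (a * t) t c (pd1 g) := by
  funext p
  exact fderiv_sc hg a t c p _

lemma pd2_sc {g : ℝ × ℝ → ℝ} (hg : Differentiable ℝ g) (a t : ℝ) (c : ℝ × ℝ) :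
    pd2 (sc a t c g) = sc (a * t) t c (pd2 g) := by
  funext p
  exact fderiv_sc hg a t c p _

lemma pd1_sum {ι : Type} (T : Finset ι) (F : ι → ℝ × ℝ → ℝ) (hF : ∀ i, Differentiable ℝ (F i)) :
    pd1 (fun p => ∑ i ∈ T, F i p) = fun p => ∑ i ∈ T, pd1 (F i) p := by
  funext p
  unfold pd1
  rw [fderiv_fun_sum (fun i _ => hF i p)]
  simp

lemma pd2_sum {ι : Type} (T : Finset ι) (F : ι → ℝ × ℝ → ℝ) (hF : ∀ i, Differentiable ℝ (F i)) :
    pd2 (fun p => ∑ i ∈ T, F i p) = fun p => ∑ i ∈ T, pd2 (F i) p := by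
  funext p
  unfold pd2
  rw [fderiv_fun_sum (fun i _ => hF i p)]
  simp

/-- At most one term is non-zero. -/
lemma abs_sum_one {ι : Type} (T : Finset ι) (u : ι → ℝ)
    (h : ∀ i ∈ T, ∀ j ∈ T, u i ≠ 0 → u j ≠ 0 → i = j) :
    |∑ i ∈ T, u i| = ∑ i ∈ T, |u i| := by
  by_cases h0 : ∃ i ∈ T, u i ≠ 0
  · obtain ⟨i, hi, hu⟩ := h0
    have hz : ∀ j ∈ T, j ≠ i → u j = 0 := by
      intro j hj hji
      by_contra hne
      exact hji (h j hj i hi hne hu)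
    rw [Finset.sum_eq_single_of_mem i hi hz,
      Finset.sum_eq_single_of_mem i hi (fun j hj hji => by simp [hz j hj hji])]
  · push Not at h0
    rw [Finset.sum_eq_zero h0, Finset.sum_eq_zero (fun i hi => by simp [h0 i hi])]
    simp

lemma abs_sum_one_le {ι : Type} (T : Finset ι) (u : ι → ℝ) (A : ℝ) (hA : 0 ≤ A)
    (h : ∀ i ∈ T, ∀ j ∈ T, u i ≠ 0 → u j ≠ 0 → i = j) (hb : ∀ i ∈ T, |u i| ≤ A) :
    |∑ i ∈ T, u i| ≤ A := by
  by_cases h0 : ∃ i ∈ T, u i ≠ 0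
  · obtain ⟨i, hi, hu⟩ := h0
    have hz : ∀ j ∈ T, j ≠ i → u j = 0 := by
      intro j hj hji
      by_contra hne
      exact hji (h j hj i hi hne hu)
    rw [Finset.sum_eq_single_of_mem i hi hz]
    exact hb i hi
  · push Not at h0
    rw [Finset.sum_eq_zero h0]
    simpa

/-- grid centers -/
def ctr (N : ℕ) (i : Fin N × Fin N) : ℝ × ℝ :=
  (-(1/2) + (2 * (i.1 : ℝ) + 1) / (2 * N), -(1/2) + (2 * (i.2 : ℝ) + 1) / (2 * N))

lemma grid_aux (N : ℕ) (hN : 0 < N) (i : Fin N) (x : ℝ)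
    (h : |2 * (N:ℝ) * (x - (-(1/2) + (2 * (i : ℝ) + 1) / (2 * N)))| < 1) :
    |x| ≤ 1/2 ∧ (2 * (i:ℝ) < 2 * N * x + N ∧ 2 * N * x + N < 2 * (i:ℝ) + 2) := by
  have hN' : (0:ℝ) < N := by exact_mod_cast hN
  have e : 2 * (N:ℝ) * (x - (-(1/2) + (2 * (i : ℝ) + 1) / (2 * N)))
      = (2 * N * x + N) - (2 * i + 1) := by
    field_simp
    ring
  rw [e, abs_lt] at h
  have hi : (i:ℝ) + 1 ≤ N := by exact_mod_cast i.2
  have hi0 : (0:ℝ) ≤ i := by positivity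
  refine ⟨?_, by linarith, by linarith⟩
  rw [abs_le]
  constructor
  · by_contra hc
    push Not at hc
    nlinarith
  · by_contra hc
    push Not at hc
    nlinarith

lemma uball_abs {q : ℝ × ℝ} (h : q ∈ uball) : |q.1| < 1 ∧ |q.2| < 1 := by
  have h' : q.1 ^ 2 + q.2 ^ 2 < 1 := h
  constructor
  · rw [← sq_lt_one_iff_abs_lt_one]; nlinarith [sq_nonneg q.2]
  · rw [← sq_lt_one_iff_abs_lt_one]; nlinarith [sq_nonneg q.1]

lemma grid_bound (N : ℕ) (hN : 0 < N) (i : Fin N × Fin N) (p : ℝ × ℝ)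
    (h : (2 * (N:ℝ)) • (p - ctr N i) ∈ uball) : |p.1| ≤ 1/2 ∧ |p.2| ≤ 1/2 := by
  obtain ⟨h1, h2⟩ := uball_abs h
  exact ⟨(grid_aux N hN i.1 p.1 h1).1, (grid_aux N hN i.2 p.2 h2).1⟩

lemma grid_unique (N : ℕ) (hN : 0 < N) (i j : Fin N × Fin N) (p : ℝ × ℝ)
    (hi : (2 * (N:ℝ)) • (p - ctr N i) ∈ uball) (hj : (2 * (N:ℝ)) • (p - ctr N j) ∈ uball) :
    i = j := by
  obtain ⟨h1, h2⟩ := uball_abs hi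
  obtain ⟨k1, k2⟩ := uball_abs hj
  have key : ∀ (a b : Fin N) (z : ℝ), (2 * (a:ℝ) < z ∧ z < 2 * (a:ℝ) + 2) →
      (2 * (b:ℝ) < z ∧ z < 2 * (b:ℝ) + 2) → a = b := by
    intro a b z ha hb
    have e1 : (a:ℝ) < b + 1 := by linarith [ha.1, hb.2]
    have e2 : (b:ℝ) < a + 1 := by linarith [hb.1, ha.2]
    have e1' : (a:ℕ) < b + 1 := by exact_mod_cast e1
    have e2' : (b:ℕ) < a + 1 := by exact_mod_cast e2
    exact Fin.ext (by omega)
  exact Prod.ext (key _ _ _ (grid_aux N hN i.1 p.1 h1).2 (grid_aux N hN j.1 p.1 k1).2)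
    (key _ _ _ (grid_aux N hN i.2 p.2 h2).2 (grid_aux N hN j.2 p.2 k2).2)

/-- tiling of any function supported in the ball -/
def tile (N : ℕ) (a : ℝ) (g : ℝ × ℝ → ℝ) : ℝ × ℝ → ℝ :=
  fun p => ∑ i : Fin N × Fin N, sc a (2 * N) (ctr N i) g p

lemma tile_contDiff {g : ℝ × ℝ → ℝ} (hg : ContDiff ℝ (⊤ : ℕ∞) g) (N : ℕ) (a : ℝ) :
    ContDiff ℝ (⊤ : ℕ∞) (tile N a g) := by
  unfold tile
  exact ContDiff.sum (fun i _ => sc_contDiff hg _ _ _)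

lemma pd1_tile {g : ℝ × ℝ → ℝ} (hg : ContDiff ℝ (⊤ : ℕ∞) g) (N : ℕ) (a : ℝ) :
    pd1 (tile N a g) = tile N (a * (2 * N)) (pd1 g) := by
  unfold tile
  rw [pd1_sum _ _ (fun i => diff_of_cd (sc_contDiff hg _ _ _))]
  simp_rw [pd1_sc (diff_of_cd hg)]

lemma pd2_tile {g : ℝ × ℝ → ℝ} (hg : ContDiff ℝ (⊤ : ℕ∞) g) (N : ℕ) (a : ℝ) :
    pd2 (tile N a g) = tile N (a * (2 * N)) (pd2 g) := by
  unfold tile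
  rw [pd2_sum _ _ (fun i => diff_of_cd (sc_contDiff hg _ _ _))]
  simp_rw [pd2_sc (diff_of_cd hg)]

lemma sc_ne {g : ℝ × ℝ → ℝ} (hs : tsupport g ⊆ uball) {a t : ℝ} {c p : ℝ × ℝ}
    (h : sc a t c g p ≠ 0) : t • (p - c) ∈ uball :=
  hs (subset_tsupport g (right_ne_zero_of_mul h))

lemma tile_abs_le {g : ℝ × ℝ → ℝ} (hs : tsupport g ⊆ uball) (N : ℕ) (hN : 0 < N) (a A : ℝ)
    (ha : 0 ≤ a) (hA : ∀ p, |g p| ≤ A) (p : ℝ × ℝ) : |tile N a g p| ≤ a * A := by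
  have hA0 : 0 ≤ A := (abs_nonneg _).trans (hA 0)
  refine abs_sum_one_le _ _ _ (by positivity)
    (fun i _ j _ hi hj => grid_unique N hN i j p (sc_ne hs hi) (sc_ne hs hj)) (fun i _ => ?_)
  unfold sc
  rw [abs_mul, abs_of_nonneg ha]
  gcongr
  exact hA _

lemma tile_integral {g : ℝ × ℝ → ℝ} (hs : tsupport g ⊆ uball) (hc : Continuous g)
    (hk : HasCompactSupport g) (N : ℕ) (hN : 0 < N) :
    ∫ p, |tile N 1 g p| = (1/4) * ∫ p, |g p| := by
  have hi : Integrable (fun p => |g p|) := (hc.integrable_of_hasCompactSupport hk).abs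
  have hN' : (0:ℝ) < N := by exact_mod_cast hN
  have e : ∀ p, |tile N 1 g p| =
      ∑ i : Fin N × Fin N, (fun q => |g ((2 * (N:ℝ)) • q)|) (p - ctr N i) := by
    intro p
    unfold tile
    rw [abs_sum_one _ _
      (fun i _ j _ hi hj => grid_unique N hN i j p (sc_ne hs hi) (sc_ne hs hj))]
    simp [sc]
  simp_rw [e]
  have hi2 : Integrable (fun q : ℝ × ℝ => |g ((2 * (N:ℝ)) • q)|) :=
    hi.comp_smul (by positivity : (2 * (N:ℝ)) ≠ 0)
  rw [integral_finsetSum _ (fun i _ => hi2.comp_sub_right (ctr N i))]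
  have : ∀ i : Fin N × Fin N, ∫ p, (fun q => |g ((2 * (N:ℝ)) • q)|) (p - ctr N i)
      = ((2 * (N:ℝ)) ^ 2)⁻¹ * ∫ p, |g p| := by
    intro i
    rw [integral_sub_right_eq_self (fun q => |g ((2 * (N:ℝ)) • q)|) (ctr N i)]
    rw [Measure.integral_comp_smul volume (fun q => |g q|) (2 * (N:ℝ))]
    simp [Module.finrank_prod]
  simp_rw [this]
  simp
  field_simp
  ring

lemma tile_support {g : ℝ × ℝ → ℝ} (hs : tsupport g ⊆ uball) (N : ℕ) (hN : 0 < N) (a : ℝ) :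
    tsupport (tile N a g) ⊆ Metric.closedBall 0 (1/2) := by
  refine closure_minimal (fun p hp => ?_) Metric.isClosed_closedBall
  obtain ⟨i, -, hi⟩ := Finset.exists_ne_zero_of_sum_ne_zero (s := Finset.univ)
    (f := fun i : Fin N × Fin N => sc a (2 * N) (ctr N i) g p) hp
  obtain ⟨h1, h2⟩ := grid_bound N hN i p (sc_ne hs hi)
  rw [mem_closedBall_zero_iff, Prod.norm_def]
  exact max_le h1 h2

lemma closedBall_uball : Metric.closedBall (0 : ℝ × ℝ) (1/2) ⊆ uball := by
  intro p hp
  rw [mem_closedBall_zero_iff, Prod.norm_def, max_le_iff] at hp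
  obtain ⟨h1, h2⟩ := hp
  rw [Real.norm_eq_abs] at h1 h2
  show p.1 ^ 2 + p.2 ^ 2 < 1
  have h1' := sq_le_sq' (abs_le.1 h1).1 (abs_le.1 h1).2
  have h2' := sq_le_sq' (abs_le.1 h2).1 (abs_le.1 h2).2
  linarith

lemma emag_le (a b : ℝ) : emag (a, b) ≤ |a| + |b| := by
  unfold emag
  refine Real.sqrt_le_iff.2 ⟨by positivity, ?_⟩
  have := mul_nonneg (abs_nonneg a) (abs_nonneg b)
  simp only
  nlinarith [sq_abs a, sq_abs b]

lemma bdd_of {g : ℝ × ℝ → ℝ} (hc : Continuous g) (hk : HasCompactSupport g) :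
    ∃ A, ∀ p, |g p| ≤ A := by
  obtain ⟨A, hA⟩ := hk.exists_bound_of_continuous hc
  exact ⟨A, hA⟩

/-- Removing the lower order terms. -/
lemma reduce (C : ℝ) (H : ∀ f : ℝ × ℝ → ℝ,
        ContDiff ℝ (⊤ : ℕ∞) f → HasCompactSupport f → tsupport f ⊆ uball →
        (∫ p, |pd1 (pd1 f) p|) ≤
          C * ((⨆ p, |f p|) + (⨆ p, emag (pd1 f p, pd2 f p)) +
            ∫ p, |pd1 (pd1 f) p + pd2 (pd2 f) p|))
    (g : ℝ × ℝ → ℝ) (hg : ContDiff ℝ (⊤ : ℕ∞) g) (hk : HasCompactSupport g)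
    (hs : tsupport g ⊆ uball) :
    (∫ p, |pd1 (pd1 g) p|) ≤ |C| * ∫ p, |pd1 (pd1 g) p + pd2 (pd2 g) p| := by
  obtain ⟨A, hA⟩ := bdd_of hg.continuous hk
  obtain ⟨B₁, hB₁⟩ := bdd_of (pd1_contDiff hg).continuous (cs_of_ts hk (ts_pd1 g))
  obtain ⟨B₂, hB₂⟩ := bdd_of (pd2_contDiff hg).continuous (cs_of_ts hk (ts_pd2 g))
  set I := ∫ p, |pd1 (pd1 g) p|
  set J := ∫ p, |pd1 (pd1 g) p + pd2 (pd2 g) p|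
  have hs1 := (ts_pd1 g).trans hs
  have hs2 := (ts_pd2 g).trans hs
  have hs11 := (ts_pd1 (pd1 g)).trans hs1
  have key : ∀ N : ℕ, (1/4) * I ≤ |C| * ((1 / (2 * ((N:ℝ) + 1))) ^ 2 * A
      + (1 / (2 * ((N:ℝ) + 1))) * (B₁ + B₂) + (1/4) * J) := by
    intro n
    obtain ⟨N, hNn⟩ : ∃ N, N = n + 1 := ⟨_, rfl⟩
    have hN : 0 < N := by omega
    have hN' : (0:ℝ) < N := by exact_mod_cast hN
    have hNr : (n:ℝ) + 1 = N := by rw [hNn]; push_cast; rfl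
    rw [hNr]
    set r : ℝ := 1 / (2 * (N:ℝ)) with hr
    have hr0 : 0 ≤ r := by positivity
    have hrN : r ^ 2 * (2 * N) = r := by rw [hr]; field_simp
    have hrN1 : r * (2 * N) = 1 := by rw [hr]; field_simp
    have h1 : pd1 (tile N (r ^ 2) g) = tile N r (pd1 g) := by rw [pd1_tile hg, hrN]
    have h2 : pd2 (tile N (r ^ 2) g) = tile N r (pd2 g) := by rw [pd2_tile hg, hrN]
    have h11 : pd1 (tile N r (pd1 g)) = tile N 1 (pd1 (pd1 g)) := by
      rw [pd1_tile (pd1_contDiff hg), hrN1]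
    have h22 : pd2 (tile N r (pd2 g)) = tile N 1 (pd2 (pd2 g)) := by
      rw [pd2_tile (pd2_contDiff hg), hrN1]
    have hadd : ∀ p, tile N 1 (pd1 (pd1 g)) p + tile N 1 (pd2 (pd2 g)) p
        = tile N 1 (fun q => pd1 (pd1 g) q + pd2 (pd2 g) q) p := by
      intro p
      simp [tile, sc, Finset.sum_add_distrib]
    have hsub := tile_support hs N hN (r ^ 2)
    have := H (tile N (r ^ 2) g) (tile_contDiff hg _ _)
      ((isCompact_closedBall _ _).of_isClosed_subset (isClosed_tsupport _) hsub)
      (hsub.trans closedBall_uball)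
    rw [h1, h2, h11, h22] at this
    simp_rw [hadd] at this
    have hc11 := (pd1_contDiff (pd1_contDiff hg)).continuous
    have hc22 := (pd2_contDiff (pd2_contDiff hg)).continuous
    have hk11 := cs_of_ts hk ((ts_pd1 (pd1 g)).trans (ts_pd1 g))
    have hk22 := cs_of_ts hk ((ts_pd2 (pd2 g)).trans (ts_pd2 g))
    have hsΔ : tsupport (fun q => pd1 (pd1 g) q + pd2 (pd2 g) q) ⊆ uball := by
      refine (tsupport_add _ _).trans (Set.union_subset hs11 ?_)
      exact ((ts_pd2 (pd2 g)).trans (ts_pd2 g)).trans hs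
    rw [tile_integral hs11 hc11 hk11 N hN,
      tile_integral hsΔ (hc11.add hc22) (hk11.add hk22) N hN] at this
    have b1 : (⨆ p, |tile N (r ^ 2) g p|) ≤ r ^ 2 * A :=
      ciSup_le (fun p => tile_abs_le hs N hN _ _ (by positivity) hA p)
    have b2 : (⨆ p, emag (tile N r (pd1 g) p, tile N r (pd2 g) p)) ≤ r * (B₁ + B₂) := by
      refine ciSup_le (fun p => (emag_le _ _).trans ?_)
      rw [mul_add]
      exact add_le_add (tile_abs_le hs1 N hN _ _ hr0 hB₁ p) (tile_abs_le hs2 N hN _ _ hr0 hB₂ p)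
    have b3 : 0 ≤ (⨆ p, |tile N (r ^ 2) g p|) := Real.iSup_nonneg (fun p => abs_nonneg _)
    have b4 : 0 ≤ (⨆ p, emag (tile N r (pd1 g) p, tile N r (pd2 g) p)) :=
      Real.iSup_nonneg (fun p => Real.sqrt_nonneg _)
    have b5 : 0 ≤ J := integral_nonneg (fun p => abs_nonneg _)
    refine this.trans ((mul_le_mul_of_nonneg_right (le_abs_self C) (by positivity)).trans ?_)
    gcongr
  have lim : Filter.Tendsto (fun N : ℕ => |C| * ((1 / (2 * ((N:ℝ) + 1))) ^ 2 * A
      + (1 / (2 * ((N:ℝ) + 1))) * (B₁ + B₂) + (1/4) * J)) Filter.atTop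
      (nhds (|C| * ((0:ℝ) ^ 2 * A + 0 * (B₁ + B₂) + (1/4) * J))) := by
    have h0 : Filter.Tendsto (fun N : ℕ => 1 / (2 * ((N:ℝ) + 1))) Filter.atTop (nhds 0) := by
      have := (tendsto_one_div_add_atTop_nhds_zero_nat (𝕜 := ℝ)).const_mul (1/2)
      simp only [mul_zero] at this
      refine this.congr (fun n => ?_)
      field_simp
    exact ((((h0.pow 2).mul_const A).add (h0.mul_const (B₁ + B₂))).add_const _).const_mul _
  have := ge_of_tendsto' lim key
  linarith

/-- radial cutoff in terms of the squared radius -/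
def th (s : ℝ) : ℝ := Real.smoothTransition (2 - 4 * s)

lemma th_cd : ContDiff ℝ (⊤ : ℕ∞) th := by
  unfold th
  exact Real.smoothTransition.contDiff.comp (by fun_prop)

lemma th'_cd : ContDiff ℝ (⊤ : ℕ∞) (deriv th) := by
  have : ContDiff ℝ ((⊤ : ℕ∞) + 1) th := th_cd
  exact (contDiff_succ_iff_deriv.1 this).2.2

lemma th''_cd : ContDiff ℝ (⊤ : ℕ∞) (deriv (deriv th)) := by
  have : ContDiff ℝ ((⊤ : ℕ∞) + 1) (deriv th) := th'_cd
  exact (contDiff_succ_iff_deriv.1 this).2.2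

lemma th_hd (s : ℝ) : HasDerivAt th (deriv th s) s :=
  (th_cd.differentiable (by simp) s).hasDerivAt

lemma th'_hd (s : ℝ) : HasDerivAt (deriv th) (deriv (deriv th) s) s :=
  (th'_cd.differentiable (by simp) s).hasDerivAt

lemma th_one {s : ℝ} (h : s ≤ 1/4) : th s = 1 :=
  Real.smoothTransition.one_of_one_le (by linarith)

lemma th_zero {s : ℝ} (h : 1/2 ≤ s) : th s = 0 :=
  Real.smoothTransition.zero_of_nonpos (by linarith)

lemma th_small {s : ℝ} (h : s < 1/4) : deriv th s = 0 ∧ deriv (deriv th) s = 0 := by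
  have key : ∀ u < (1/4 : ℝ), deriv th u = 0 := by
    intro u hu
    have : th =ᶠ[nhds u] fun _ => 1 := by
      filter_upwards [Iio_mem_nhds hu] with v hv
      exact th_one (le_of_lt hv)
    rw [this.deriv_eq]; simp
  refine ⟨key s h, ?_⟩
  have : deriv th =ᶠ[nhds s] fun _ => 0 := by
    filter_upwards [Iio_mem_nhds h] with v hv
    exact key v hv
  rw [this.deriv_eq]; simp

lemma th_large {s : ℝ} (h : 1/2 < s) : deriv th s = 0 ∧ deriv (deriv th) s = 0 := by
  have key : ∀ u > (1/2 : ℝ), deriv th u = 0 := by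
    intro u hu
    have : th =ᶠ[nhds u] fun _ => 0 := by
      filter_upwards [Ioi_mem_nhds hu] with v hv
      exact th_zero (le_of_lt hv)
    rw [this.deriv_eq]; simp
  refine ⟨key s h, ?_⟩
  have : deriv th =ᶠ[nhds s] fun _ => 0 := by
    filter_upwards [Ioi_mem_nhds h] with v hv
    exact key v hv
  rw [this.deriv_eq]; simp

/-- the test function -/
def gg (δ : ℝ) (p : ℝ × ℝ) : ℝ := th (p.1 ^ 2 + p.2 ^ 2) * Real.log (p.1 ^ 2 + p.2 ^ 2 + δ)

def D1 (δ s : ℝ) : ℝ := deriv th s * Real.log (s + δ) + th s / (s + δ)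

def D2 (δ s : ℝ) : ℝ := deriv (deriv th) s * Real.log (s + δ) + 2 * deriv th s / (s + δ)
  - th s / (s + δ) ^ 2

lemma hd0 {δ s : ℝ} (h : 0 < s + δ) :
    HasDerivAt (fun s => th s * Real.log (s + δ)) (D1 δ s) s := by
  have h1 : HasDerivAt (fun s => Real.log (s + δ)) (1 / (s + δ)) s :=
    ((hasDerivAt_id s).add_const δ).log h.ne'
  have := (th_hd s).mul h1
  refine HasDerivAt.congr_deriv this ?_
  unfold D1
  ring

lemma hd1 {δ s : ℝ} (h : 0 < s + δ) : HasDerivAt (D1 δ) (D2 δ s) s := by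
  have h0 : HasDerivAt (fun s => s + δ) 1 s := (hasDerivAt_id s).add_const δ
  have h1 : HasDerivAt (fun s => Real.log (s + δ)) (1 / (s + δ)) s := h0.log h.ne'
  have := ((th'_hd s).mul h1).add ((th_hd s).div h0 h.ne')
  refine HasDerivAt.congr_deriv this ?_
  unfold D2
  field_simp
  ring

lemma gg_cd {δ : ℝ} (hδ : 0 < δ) : ContDiff ℝ (⊤ : ℕ∞) (gg δ) := by
  unfold gg
  refine (th_cd.comp (by fun_prop)).mul (ContDiff.log (by fun_prop) (fun p => ?_))
  positivity

lemma hsq (x y : ℝ) : HasDerivAt (fun x : ℝ => x ^ 2 + y) (2 * x) x := by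
  have := ((hasDerivAt_id x).pow 2).add_const y
  simpa using this

lemma hsq' (x y : ℝ) : HasDerivAt (fun x : ℝ => y + x ^ 2) (2 * x) x := by
  have := ((hasDerivAt_id x).pow 2).const_add y
  simpa using this

lemma gg1 {δ : ℝ} (hδ : 0 < δ) :
    pd1 (gg δ) = fun p => D1 δ (p.1 ^ 2 + p.2 ^ 2) * (2 * p.1) := by
  funext p
  refine pd1_eq (diff_of_cd (gg_cd hδ) p) ?_
  have h : 0 < p.1 ^ 2 + p.2 ^ 2 + δ := by positivity
  exact HasDerivAt.comp p.1 (hd0 h) (hsq p.1 (p.2 ^ 2))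

lemma gg2 {δ : ℝ} (hδ : 0 < δ) :
    pd2 (gg δ) = fun p => D1 δ (p.1 ^ 2 + p.2 ^ 2) * (2 * p.2) := by
  funext p
  refine pd2_eq (diff_of_cd (gg_cd hδ) p) ?_
  have h : 0 < p.1 ^ 2 + p.2 ^ 2 + δ := by positivity
  exact HasDerivAt.comp p.2 (hd0 h) (hsq' p.2 (p.1 ^ 2))

lemma gg11 {δ : ℝ} (hδ : 0 < δ) (p : ℝ × ℝ) :
    pd1 (pd1 (gg δ)) p = D2 δ (p.1 ^ 2 + p.2 ^ 2) * (4 * p.1 ^ 2)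
      + 2 * D1 δ (p.1 ^ 2 + p.2 ^ 2) := by
  refine pd1_eq (diff_of_cd (pd1_contDiff (gg_cd hδ)) p) ?_
  rw [gg1 hδ]
  have h : 0 < p.1 ^ 2 + p.2 ^ 2 + δ := by positivity
  have h1 : HasDerivAt (fun x : ℝ => D1 δ (x ^ 2 + p.2 ^ 2)) _ p.1 :=
    HasDerivAt.comp p.1 (hd1 h) (hsq p.1 (p.2 ^ 2))
  have := h1.mul ((hasDerivAt_id p.1).const_mul 2)
  refine HasDerivAt.congr_deriv this ?_
  simp
  ring

lemma gg22 {δ : ℝ} (hδ : 0 < δ) (p : ℝ × ℝ) :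
    pd2 (pd2 (gg δ)) p = D2 δ (p.1 ^ 2 + p.2 ^ 2) * (4 * p.2 ^ 2)
      + 2 * D1 δ (p.1 ^ 2 + p.2 ^ 2) := by
  refine pd2_eq (diff_of_cd (pd2_contDiff (gg_cd hδ)) p) ?_
  rw [gg2 hδ]
  have h : 0 < p.1 ^ 2 + p.2 ^ 2 + δ := by positivity
  have h1 : HasDerivAt (fun x : ℝ => D1 δ (p.1 ^ 2 + x ^ 2)) _ p.2 :=
    HasDerivAt.comp p.2 (hd1 h) (hsq' p.2 (p.1 ^ 2))
  have := h1.mul ((hasDerivAt_id p.2).const_mul 2)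
  refine HasDerivAt.congr_deriv this ?_
  simp
  ring

lemma gg_ts (δ : ℝ) : tsupport (gg δ) ⊆ {p : ℝ × ℝ | p.1 ^ 2 + p.2 ^ 2 ≤ 1/2} := by
  refine closure_minimal (fun p hp => ?_) (isClosed_le (by fun_prop) continuous_const)
  by_contra hc
  apply hp
  have : (1/2 : ℝ) ≤ p.1 ^ 2 + p.2 ^ 2 := by
    simp only [Set.mem_ofPred_eq, not_le] at hc
    exact hc.le
  simp [gg, th_zero this]

lemma gg_ts_ball (δ : ℝ) : tsupport (gg δ) ⊆ uball := by
  refine (gg_ts δ).trans (fun p hp => ?_)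
  have : p.1 ^ 2 + p.2 ^ 2 ≤ 1/2 := hp
  show p.1 ^ 2 + p.2 ^ 2 < 1
  linarith

lemma uball_sub : uball ⊆ Metric.closedBall (0 : ℝ × ℝ) 1 := by
  intro p hp
  obtain ⟨h1, h2⟩ := uball_abs hp
  rw [mem_closedBall_zero_iff, Prod.norm_def]
  exact max_le h1.le h2.le

lemma gg_cs (δ : ℝ) : HasCompactSupport (gg δ) :=
  (isCompact_closedBall _ _).of_isClosed_subset (isClosed_tsupport _)
    ((gg_ts_ball δ).trans uball_sub)

/-- the Poisson-type kernel -/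
def FF (p : ℝ × ℝ) : ℝ := 1 / (1 + p.1 ^ 2 + p.2 ^ 2) ^ 2

lemma FF_int : Integrable FF := by
  have h := integrable_inv_one_add_sq.mul_prod integrable_inv_one_add_sq
  refine Integrable.mono' h ?_ (Filter.Eventually.of_forall fun p => ?_)
  · apply Continuous.aestronglyMeasurable
    unfold FF
    refine continuous_const.div (by fun_prop) (fun p => ?_)
    positivity
  · unfold FF
    rw [Real.norm_of_nonneg (by positivity), ← mul_inv, one_div]
    gcongr
    nlinarith [sq_nonneg p.1, sq_nonneg p.2, mul_nonneg (sq_nonneg p.1) (sq_nonneg p.2)]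

lemma lap_bound : ∃ K : ℝ, ∀ ε : ℝ, 0 < ε → ε ≤ 1 →
    ∫ p, |pd1 (pd1 (gg (ε ^ 2))) p + pd2 (pd2 (gg (ε ^ 2))) p| ≤ K := by
  obtain ⟨M₁, hM₁⟩ := (isCompact_Icc (a := (0:ℝ)) (b := 1)).exists_bound_of_continuousOn
    th'_cd.continuous.continuousOn
  obtain ⟨M₂, hM₂⟩ := (isCompact_Icc (a := (0:ℝ)) (b := 1)).exists_bound_of_continuousOn
    th''_cd.continuous.continuousOn
  have hM₁0 : 0 ≤ M₁ := (norm_nonneg _).trans (hM₁ 0 (by simp))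
  have hM₂0 : 0 ≤ M₂ := (norm_nonneg _).trans (hM₂ 0 (by simp))
  set M := 4 * ((M₁ + M₂) * 3) + 8 * M₁ with hM
  have hM0 : 0 ≤ M := by positivity
  refine ⟨(∫ p, (Metric.closedBall (0 : ℝ × ℝ) 1).indicator (fun _ => M) p) + 4 * ∫ p, FF p, ?_⟩
  intro ε hε hε1
  set δ := ε ^ 2 with hδd
  have hδ : 0 < δ := by positivity
  have hδ1 : δ ≤ 1 := by rw [hδd]; nlinarith
  have hFi : Integrable (fun p : ℝ × ℝ => δ⁻¹ * FF (ε⁻¹ • p)) :=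
    (FF_int.comp_smul (inv_ne_zero hε.ne')).const_mul _
  have hFv : ∫ p : ℝ × ℝ, δ⁻¹ * FF (ε⁻¹ • p) = ∫ p, FF p := by
    rw [integral_const_mul, Measure.integral_comp_smul]
    simp [Module.finrank_prod, hδd]
    field_simp
  have hInd : Integrable ((Metric.closedBall (0 : ℝ × ℝ) 1).indicator (fun _ => M)) := by
    rw [integrable_indicator_iff Metric.isClosed_closedBall.measurableSet]
    exact integrableOn_const (isCompact_closedBall _ _).measure_ne_top
  rw [← hFv, ← integral_const_mul, ← integral_add hInd (hFi.const_mul 4)]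
  refine integral_mono_of_nonneg (Filter.Eventually.of_forall fun p => abs_nonneg _)
    (hInd.add (hFi.const_mul 4)) (Filter.Eventually.of_forall fun p => ?_)
  simp only [Pi.add_apply]
  rw [gg11 hδ, gg22 hδ]
  have hFp : δ⁻¹ * FF (ε⁻¹ • p) = δ / (p.1 ^ 2 + p.2 ^ 2 + δ) ^ 2 := by
    simp only [FF, Prod.smul_fst, Prod.smul_snd, smul_eq_mul, hδd]
    field_simp
    ring
  rw [hFp]
  have hs : 0 ≤ p.1 ^ 2 + p.2 ^ 2 := by positivity
  have hmem : p.1 ^ 2 + p.2 ^ 2 < 1 → p ∈ Metric.closedBall (0 : ℝ × ℝ) 1 :=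
    fun h => uball_sub h
  have e : D2 δ (p.1 ^ 2 + p.2 ^ 2) * (4 * p.1 ^ 2) + 2 * D1 δ (p.1 ^ 2 + p.2 ^ 2)
      + (D2 δ (p.1 ^ 2 + p.2 ^ 2) * (4 * p.2 ^ 2) + 2 * D1 δ (p.1 ^ 2 + p.2 ^ 2))
      = 4 * ((p.1 ^ 2 + p.2 ^ 2) * D2 δ (p.1 ^ 2 + p.2 ^ 2) + D1 δ (p.1 ^ 2 + p.2 ^ 2)) := by ring
  rw [e]
  generalize p.1 ^ 2 + p.2 ^ 2 = s at *
  have hsδ : 0 < s + δ := by positivity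
  have e2 : 4 * (s * D2 δ s + D1 δ s) =
      (4 * ((deriv th s + s * deriv (deriv th) s) * Real.log (s + δ))
        + 8 * (deriv th s * (s / (s + δ)))) + 4 * (th s * (δ / (s + δ) ^ 2)) := by
    unfold D1 D2
    field_simp
    ring
  rw [e2]
  refine (abs_add_le _ _).trans (add_le_add ?_ ?_)
  · have hI0 : 0 ≤ (Metric.closedBall (0 : ℝ × ℝ) 1).indicator (fun _ => M) p :=
      Set.indicator_nonneg (fun _ _ => hM0) p
    rcases lt_or_ge s (1/4) with h | h
    · simpa [(th_small h).1, (th_small h).2] using hI0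
    rcases lt_or_ge (1/2) s with h' | h'
    · simpa [(th_large h').1, (th_large h').2] using hI0
    rw [Set.indicator_of_mem (hmem (by linarith))]
    have m1 : |deriv th s| ≤ M₁ := hM₁ s ⟨hs, by linarith⟩
    have m2 : |deriv (deriv th) s| ≤ M₂ := hM₂ s ⟨hs, by linarith⟩
    have hl : |Real.log (s + δ)| ≤ 3 := by
      rw [abs_le]
      constructor
      · have := Real.one_sub_inv_le_log_of_pos hsδ
        have h4 : (s + δ)⁻¹ ≤ 4 := by
          rw [inv_le_comm₀ hsδ (by norm_num)]
          linarith
        linarith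
      · have := Real.log_le_sub_one_of_pos hsδ
        linarith
    have hq : |s / (s + δ)| ≤ 1 := by
      rw [abs_of_nonneg (by positivity), div_le_one hsδ]
      linarith
    refine (abs_add_le _ _).trans ?_
    rw [abs_mul, abs_mul, abs_mul, abs_mul, hM]
    have hA : |deriv th s + s * deriv (deriv th) s| ≤ M₁ + M₂ := by
      refine (abs_add_le _ _).trans (add_le_add m1 ?_)
      rw [abs_mul, abs_of_nonneg hs]
      calc s * |deriv (deriv th) s| ≤ 1 * M₂ := by gcongr; linarith
        _ = M₂ := one_mul _
    have hB : |deriv th s| * |s / (s + δ)| ≤ M₁ * 1 := by gcongr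
    have hC : |deriv th s + s * deriv (deriv th) s| * |Real.log (s + δ)| ≤ (M₁ + M₂) * 3 := by
      gcongr
    rw [abs_of_pos (by norm_num : (0:ℝ) < 4), abs_of_pos (by norm_num : (0:ℝ) < 8)]
    linarith
  · have t0 : 0 ≤ th s := Real.smoothTransition.nonneg _
    have t1 : th s ≤ 1 := Real.smoothTransition.le_one _
    rw [abs_of_nonneg (by positivity)]
    have : 0 ≤ δ / (s + δ) ^ 2 := by positivity
    nlinarith

lemma lower_pt {ε x y : ℝ} (hε : 0 < ε) (hy : ε ≤ y) (hy4 : y ≤ 1/4)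
    (hx : x ∈ Set.Icc (-(y/2)) (y/2)) :
    1 / (4 * y ^ 2) ≤ |pd1 (pd1 (gg (ε ^ 2))) (x, y)| := by
  have hδ : 0 < ε ^ 2 := by positivity
  rw [gg11 hδ]
  simp only
  have hy0 : 0 < y := by linarith
  have hx2 : x ^ 2 ≤ y ^ 2 / 4 := by nlinarith [hx.1, hx.2]
  have hε2 : ε ^ 2 ≤ y ^ 2 := by nlinarith
  have hs : x ^ 2 + y ^ 2 < 1/4 := by nlinarith
  have hsp : 0 < x ^ 2 + y ^ 2 + ε ^ 2 := by positivity
  have e : D2 (ε ^ 2) (x ^ 2 + y ^ 2) * (4 * x ^ 2) + 2 * D1 (ε ^ 2) (x ^ 2 + y ^ 2)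
      = 2 * (y ^ 2 - x ^ 2 + ε ^ 2) / (x ^ 2 + y ^ 2 + ε ^ 2) ^ 2 := by
    unfold D1 D2
    rw [(th_small hs).1, (th_small hs).2, th_one hs.le]
    field_simp
    ring
  rw [e]
  refine le_trans ?_ (le_abs_self _)
  rw [div_le_div_iff₀ (by positivity) (by positivity)]
  have h1 : x ^ 2 + y ^ 2 + ε ^ 2 ≤ 9/4 * y ^ 2 := by linarith
  have h2 : (x ^ 2 + y ^ 2 + ε ^ 2) ^ 2 ≤ (9/4 * y ^ 2) ^ 2 := by gcongr
  have h3 : 3/4 * y ^ 2 ≤ y ^ 2 - x ^ 2 + ε ^ 2 := by nlinarith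
  nlinarith [mul_le_mul_of_nonneg_right h3 (sq_nonneg y), sq_nonneg (y ^ 2)]

lemma lower {ε : ℝ} (hε : 0 < ε) (hε4 : ε ≤ 1/4) :
    (1/4) * Real.log ((1/4) / ε) ≤ ∫ p, |pd1 (pd1 (gg (ε ^ 2))) p| := by
  have hδ : 0 < ε ^ 2 := by positivity
  set F : ℝ × ℝ → ℝ := fun p => |pd1 (pd1 (gg (ε ^ 2))) p| with hF
  have hc0 : Continuous (pd1 (pd1 (gg (ε ^ 2)))) :=
    (pd1_contDiff (pd1_contDiff (gg_cd hδ))).continuous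
  have hc : Continuous F := hc0.abs
  have hk0 : HasCompactSupport (pd1 (pd1 (gg (ε ^ 2)))) :=
    cs_of_ts (gg_cs _) ((ts_pd1 _).trans (ts_pd1 _))
  have hFi : Integrable F := (hc0.integrable_of_hasCompactSupport hk0).abs
  have hFz : ∀ x y, F (x, y) ≠ 0 → |x| ≤ 1 := by
    intro x y h
    have h1 : (x, y) ∈ uball := gg_ts_ball (ε ^ 2) ((ts_pd1 _).trans (ts_pd1 _)
      (subset_tsupport _ (abs_ne_zero.1 h)))
    exact (uball_abs h1).1.le
  have hslice : ∀ y, Integrable (fun x => F (x, y)) := by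
    intro y
    refine Continuous.integrable_of_hasCompactSupport (by fun_prop) ?_
    refine HasCompactSupport.intro (isCompact_Icc (a := (-1:ℝ)) (b := 1)) (fun x hx => ?_)
    by_contra hne
    exact hx (abs_le.1 (hFz x y hne))
  have hFi' : Integrable F ((volume : Measure ℝ).prod volume) := hFi
  have hH : Integrable (fun y => ∫ x, F (x, y)) := hFi'.swap.integral_prod_left
  have e1 : ∫ p, F p = ∫ y, ∫ x, F (x, y) := integral_prod_symm F hFi'
  rw [e1]
  have hpt : ∀ y ∈ Set.Ioc ε (1/4), (1/4) * (1 / y) ≤ ∫ x, F (x, y) := by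
    intro y hy
    have hy0 : 0 < y := hε.trans hy.1
    have a1 : ∫ x in Set.Icc (-(y/2)) (y/2), F (x, y) ≤ ∫ x, F (x, y) :=
      setIntegral_le_integral (hslice y) (Filter.Eventually.of_forall fun x => abs_nonneg _)
    have a2 : ∫ x in Set.Icc (-(y/2)) (y/2), 1 / (4 * y ^ 2)
        ≤ ∫ x in Set.Icc (-(y/2)) (y/2), F (x, y) :=
      setIntegral_mono_on (integrableOn_const isCompact_Icc.measure_ne_top)
        (hslice y).integrableOn measurableSet_Icc
        (fun x hx => lower_pt hε hy.1.le hy.2 hx)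
    have a3 : ∫ x in Set.Icc (-(y/2)) (y/2), 1 / (4 * y ^ 2) = (1/4) * (1 / y) := by
      rw [setIntegral_const, Real.volume_real_Icc_of_le (by linarith), smul_eq_mul]
      field_simp
      ring
    linarith
  have b1 : ∫ y in Set.Ioc ε (1/4), (∫ x, F (x, y)) ≤ ∫ y, ∫ x, F (x, y) :=
    setIntegral_le_integral hH (Filter.Eventually.of_forall fun y =>
      integral_nonneg (fun x => abs_nonneg _))
  have hii : IntervalIntegrable (fun y : ℝ => (1/4) * (1 / y)) volume ε (1/4) := by
    refine (ContinuousOn.intervalIntegrable ?_)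
    rw [Set.uIcc_of_le hε4]
    intro y hy
    have : y ≠ 0 := (hε.trans_le hy.1).ne'
    apply ContinuousAt.continuousWithinAt
    fun_prop (disch := assumption)
  have b2 : ∫ y in Set.Ioc ε (1/4), (1/4) * (1 / y) ≤ ∫ y in Set.Ioc ε (1/4), (∫ x, F (x, y)) :=
    setIntegral_mono_on ((intervalIntegrable_iff_integrableOn_Ioc_of_le hε4).1 hii)
      hH.integrableOn measurableSet_Ioc hpt
  have b3 : ∫ y in Set.Ioc ε (1/4), (1/4) * (1 / y) = (1/4) * Real.log ((1/4) / ε) := by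
    rw [← intervalIntegral.integral_of_le hε4, intervalIntegral.integral_const_mul,
      integral_one_div_of_pos hε (by norm_num)]
  linarith

/-- There is no constant `C` such that
`‖∂_x² f‖_{L¹} ≤ C (‖f‖_∞ + ‖∇f‖_∞ + ‖Δf‖_{L¹})` for all `f ∈ C_0^∞(B(0,1))`. -/
theorem no_L1_second_derivative_estimate :
    ¬ ∃ C : ℝ, ∀ f : ℝ × ℝ → ℝ,
        ContDiff ℝ (⊤ : ℕ∞) f → HasCompactSupport f → tsupport f ⊆ uball →
        (∫ p, |pd1 (pd1 f) p|) ≤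
          C * ((⨆ p, |f p|) + (⨆ p, emag (pd1 f p, pd2 f p)) +
            ∫ p, |pd1 (pd1 f) p + pd2 (pd2 f) p|) := by

  rintro ⟨C, H⟩
  obtain ⟨K, hK⟩ := lap_bound
  set L := |C| * K with hL
  set ε := (1/4) * Real.exp (-(4 * |L| + 4)) with hε
  have hε0 : 0 < ε := by positivity
  have hε4 : ε ≤ 1/4 := by
    have : Real.exp (-(4 * |L| + 4)) ≤ 1 := Real.exp_le_one_iff.2 (by
      have := abs_nonneg L
      linarith)
    linarith
  have h1 := lower hε0 hε4
  have h2 := reduce C H (gg (ε ^ 2)) (gg_cd (by positivity)) (gg_cs _) (gg_ts_ball _)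
  have h3 := mul_le_mul_of_nonneg_left (hK ε hε0 (by linarith)) (abs_nonneg C)
  have h4 : Real.log ((1/4) / ε) = 4 * |L| + 4 := by
    have : (1/4) / ε = Real.exp (4 * |L| + 4) := by
      rw [hε, Real.exp_neg]
      field_simp
    rw [this, Real.log_exp]
  rw [h4] at h1
  have := le_abs_self L
  linarith
end
end

section
/- For every ε > 0 there exists a function q ∈ C_0^∞(ℝ²) with support in [-1,1]², not identically zero, such that ∫_{-1}^{1} q(x, y₀) dx = 0 for every y₀ and ∫_{-1}^{1} q(x₀, y) dy = 0 for every x₀, and, with q^x(x₀,y) = ∫_{-1}^{x₀} q(x,y) dx and q^y(x,y₀) = ∫_{-1}^{y₀} q(x,y) dy, one has ‖∂_x q^y‖_{L¹} + ‖∂_y q^x‖_{L¹} + ‖q^x‖_∞ + ‖q^y‖_∞ < ε ‖q‖_{L¹}. -/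
open MeasureTheory Real

noncomputable section

/-- `q^x(x₀,y) = ∫_{-1}^{x₀} q(x,y) dx`. -/
def intX (q : ℝ × ℝ → ℝ) (p : ℝ × ℝ) : ℝ := ∫ t in (-1 : ℝ)..p.1, q (t, p.2)

/-- `q^y(x,y₀) = ∫_{-1}^{y₀} q(x,y) dy`. -/
def intY (q : ℝ × ℝ → ℝ) (p : ℝ × ℝ) : ℝ := ∫ t in (-1 : ℝ)..p.2, q (p.1, t)

open Filter Topology

/-- Directional derivative. -/
def DD (e : ℝ × ℝ) (f : ℝ × ℝ → ℝ) (p : ℝ × ℝ) : ℝ := fderiv ℝ f p e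

/-- The support box. -/
def KB : Set (ℝ × ℝ) := Metric.closedBall 0 (1/2)

/-- Vanishing outside the box. -/
def Van {E : Type*} [Zero E] (f : ℝ × ℝ → E) : Prop := ∀ p, p ∉ KB → f p = 0

lemma Van.tsupport {E : Type*} [Zero E] {f : ℝ × ℝ → E} (h : Van f) : tsupport f ⊆ KB := by
  apply closure_minimal _ Metric.isClosed_closedBall
  intro p hp
  by_contra h'
  exact hp (h p h')

lemma Van.hcs {E : Type*} [Zero E] {f : ℝ × ℝ → E} (h : Van f) : HasCompactSupport f :=
  HasCompactSupport.of_support_subset_isCompact (isCompact_closedBall 0 (1/2))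
    ((subset_tsupport f).trans h.tsupport)

lemma Van.DD {f : ℝ × ℝ → ℝ} (h : Van f) (e : ℝ × ℝ) : Van (DD e f) := by
  intro p hp
  have : f =ᶠ[𝓝 p] fun _ => 0 := by
    filter_upwards [Metric.isClosed_closedBall.isOpen_compl.mem_nhds hp] with x hx
    exact h x hx
  simp [_root_.DD, this.fderiv_eq]

lemma DD_smooth {f : ℝ × ℝ → ℝ} (h : ContDiff ℝ (⊤ : ℕ∞) f) (e : ℝ × ℝ) :
    ContDiff ℝ (⊤ : ℕ∞) (DD e f) := by
  unfold DD
  exact (h.fderiv_right (by simp)).clm_apply contDiff_const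

lemma smooth_diff {f : ℝ × ℝ → ℝ} (h : ContDiff ℝ (⊤ : ℕ∞) f) : Differentiable ℝ f :=
  h.differentiable (by simp)

lemma DD_comm {f : ℝ × ℝ → ℝ} (h : ContDiff ℝ (⊤ : ℕ∞) f) (e g : ℝ × ℝ) :
    DD e (DD g f) = DD g (DD e f) := by
  have key : ∀ a b p, DD a (DD b f) p = fderiv ℝ (fderiv ℝ f) p a b := by
    intro a b p
    have h1 : DifferentiableAt ℝ (fderiv ℝ f) p :=
      ((h.fderiv_right (m := 1) (by norm_cast)).differentiable (by simp)) p
    have : HasFDerivAt (DD b f) _ p := h1.hasFDerivAt.clm_apply (hasFDerivAt_const b p)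
    simp [DD, this.fderiv] 
  funext p
  rw [key, key]
  exact (h.contDiffAt.isSymmSndFDerivAt (by simp; norm_cast)).eq e g

lemma DD_sub {f g : ℝ × ℝ → ℝ} (hf : Differentiable ℝ f) (hg : Differentiable ℝ g) (e p : ℝ × ℝ) :
    DD e (fun x => f x - g x) p = DD e f p - DD e g p := by
  simp [DD, fderiv_fun_sub (hf p) (hg p)]

lemma DD_cmul {f : ℝ × ℝ → ℝ} (hf : Differentiable ℝ f) (c : ℝ) (e p : ℝ × ℝ) :
    DD e (fun x => c * f x) p = c * DD e f p := by
  simp [DD, fderiv_const_mul (hf p)]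

lemma DD_cos {f : ℝ × ℝ → ℝ} (hf : Differentiable ℝ f) (L : ℝ × ℝ →L[ℝ] ℝ) (l : ℝ) (e p : ℝ × ℝ) :
    DD e (fun x => f x * cos (l * L x)) p =
      DD e f p * cos (l * L p) - l * L e * (f p * sin (l * L p)) := by
  have h1 : HasFDerivAt (fun x => l * L x) (l • L) p := (L.hasFDerivAt (x := p)).const_mul l
  have := (hf p).hasFDerivAt.mul h1.cos
  have h2 := this.fderiv
  simp only [DD]
  erw [h2]
  simp
  ring

lemma DD_sin {f : ℝ × ℝ → ℝ} (hf : Differentiable ℝ f) (L : ℝ × ℝ →L[ℝ] ℝ) (l : ℝ) (e p : ℝ × ℝ) :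
    DD e (fun x => f x * sin (l * L x)) p =
      DD e f p * sin (l * L p) + l * L e * (f p * cos (l * L p)) := by
  have h1 : HasFDerivAt (fun x => l * L x) (l • L) p := (L.hasFDerivAt (x := p)).const_mul l
  have := (hf p).hasFDerivAt.mul h1.sin
  have h2 := this.fderiv
  simp only [DD]
  erw [h2]
  simp
  ring

/-- The perturbed function. -/
def newU (u R : ℝ × ℝ → ℝ) (L : ℝ × ℝ →L[ℝ] ℝ) (l : ℝ) (p : ℝ × ℝ) : ℝ :=
  u p - (l^2)⁻¹ * (R p * cos (l * L p))

lemma newU_smooth {u R : ℝ × ℝ → ℝ} (hu : ContDiff ℝ (⊤ : ℕ∞) u) (hR : ContDiff ℝ (⊤ : ℕ∞) R)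
    (L : ℝ × ℝ →L[ℝ] ℝ) (l : ℝ) : ContDiff ℝ (⊤ : ℕ∞) (newU u R L l) := by
  unfold newU
  fun_prop

lemma newU_DD {u R : ℝ × ℝ → ℝ} (hu : ContDiff ℝ (⊤ : ℕ∞) u) (hR : ContDiff ℝ (⊤ : ℕ∞) R)
    (L : ℝ × ℝ →L[ℝ] ℝ) (l : ℝ) (e p : ℝ × ℝ) :
    DD e (newU u R L l) p = DD e u p -
      (l^2)⁻¹ * (DD e R p * cos (l * L p) - l * L e * (R p * sin (l * L p))) := by
  have := smooth_diff hu
  have hR' := smooth_diff hR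
  unfold newU
  rw [DD_sub (by fun_prop) (by fun_prop), DD_cmul (by fun_prop), DD_cos (by fun_prop)]

lemma newU_DD2 {u R : ℝ × ℝ → ℝ} (hu : ContDiff ℝ (⊤ : ℕ∞) u) (hR : ContDiff ℝ (⊤ : ℕ∞) R)
    (L : ℝ × ℝ →L[ℝ] ℝ) (l : ℝ) (hl : 0 < l) (e g p : ℝ × ℝ) :
    DD g (DD e (newU u R L l)) p = DD g (DD e u) p + L e * L g * (R p * cos (l * L p))
      - (l^2)⁻¹ * (DD g (DD e R) p * cos (l * L p)) +
       l⁻¹ * ((L g * DD e R p + L e * DD g R p) * sin (l * L p)) := by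
  have hu1 := smooth_diff (DD_smooth hu e)
  have hR1 := smooth_diff (DD_smooth hR e)
  have hR' := smooth_diff hR
  have : DD e (newU u R L l) = fun p => DD e u p -
      (l^2)⁻¹ * (DD e R p * cos (l * L p) - l * L e * (R p * sin (l * L p))) := by
    funext p; exact newU_DD hu hR L l e p
  rw [this, DD_sub (by fun_prop) (by fun_prop), DD_cmul (by fun_prop), DD_sub (by fun_prop)
    (by fun_prop), DD_cos (by fun_prop), DD_cmul (by fun_prop), DD_sin (by fun_prop)]
  field_simp
  ring

lemma Van.bound {f : ℝ × ℝ → ℝ} (h : Van f) (hc : Continuous f) : ∃ C, 0 ≤ C ∧ ∀ p, |f p| ≤ C := by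
  obtain ⟨C, hC⟩ := h.hcs.exists_bound_of_continuous hc
  exact ⟨C, (norm_nonneg _).trans (hC 0), hC⟩

lemma aux_tendsto (A B : ℝ) : Tendsto (fun l : ℝ => (l^2)⁻¹ * A + l⁻¹ * B) atTop (𝓝 0) := by
  have h1 : Tendsto (fun l : ℝ => (l^2)⁻¹) atTop (𝓝 0) :=
    tendsto_inv_atTop_zero.comp (tendsto_pow_atTop two_ne_zero)
  simpa using (h1.mul_const A).add (tendsto_inv_atTop_zero.mul_const B)

lemma err1 {u R : ℝ × ℝ → ℝ} (hu : ContDiff ℝ (⊤ : ℕ∞) u) (hR : ContDiff ℝ (⊤ : ℕ∞) R) (vR : Van R)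
    (L : ℝ × ℝ →L[ℝ] ℝ) (e : ℝ × ℝ) (δ : ℝ) (hδ : 0 < δ) :
    ∀ᶠ l : ℝ in atTop, ∀ p, |DD e (newU u R L l) p - DD e u p| < δ := by
  obtain ⟨A, hA, hA'⟩ := (vR.DD e).bound (DD_smooth hR e).continuous
  obtain ⟨B, hB, hB'⟩ := vR.bound hR.continuous
  filter_upwards [(aux_tendsto A (|L e| * B)).eventually (gt_mem_nhds hδ), eventually_gt_atTop 0]
    with l h1 hl p
  refine lt_of_le_of_lt ?_ h1
  rw [newU_DD hu hR]
  have e1 : DD e u p - (l^2)⁻¹ * (DD e R p * cos (l * L p) - l * L e * (R p * sin (l * L p)))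
    - DD e u p = -((l^2)⁻¹ * (DD e R p * cos (l * L p))) + l⁻¹ * (L e * (R p * sin (l * L p))) := by
    field_simp
    ring
  rw [e1]
  refine (abs_add_le _ _).trans ?_
  simp only [abs_neg, abs_mul, abs_inv, abs_of_pos hl, abs_of_pos (pow_pos hl 2)]
  have c1 : |DD e R p| * |cos (l * L p)| ≤ A :=
    (mul_le_of_le_one_right (abs_nonneg _) (abs_cos_le_one _)).trans (hA' p)
  have c2 : |R p| * |sin (l * L p)| ≤ B :=
    (mul_le_of_le_one_right (abs_nonneg _) (abs_sin_le_one _)).trans (hB' p)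
  gcongr

lemma err2 {u R : ℝ × ℝ → ℝ} (hu : ContDiff ℝ (⊤ : ℕ∞) u) (hR : ContDiff ℝ (⊤ : ℕ∞) R) (vR : Van R)
    (L : ℝ × ℝ →L[ℝ] ℝ) (e g : ℝ × ℝ) (δ : ℝ) (hδ : 0 < δ) :
    ∀ᶠ l : ℝ in atTop, ∀ p, |DD g (DD e (newU u R L l)) p -
      (DD g (DD e u) p + L e * L g * (R p * cos (l * L p)))| < δ := by
  obtain ⟨A, hA, hA'⟩ := ((vR.DD e).DD g).bound (DD_smooth (DD_smooth hR e) g).continuous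
  obtain ⟨B, hB, hB'⟩ := (vR.DD e).bound (DD_smooth hR e).continuous
  obtain ⟨C, hC, hC'⟩ := (vR.DD g).bound (DD_smooth hR g).continuous
  filter_upwards [(aux_tendsto A (|L g| * B + |L e| * C)).eventually (gt_mem_nhds hδ),
    eventually_gt_atTop 0] with l h1 hl p
  refine lt_of_le_of_lt ?_ h1
  rw [newU_DD2 hu hR L l hl]
  have e1 : ∀ a b c d : ℝ, a + b - c + d - (a + b) = -c + d := by intros; ring
  rw [e1]
  refine (abs_add_le _ _).trans ?_
  simp only [abs_neg, abs_mul, abs_inv, abs_of_pos hl, abs_of_pos (pow_pos hl 2)]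
  have c1 : |DD g (DD e R) p| * |cos (l * L p)| ≤ A :=
    (mul_le_of_le_one_right (abs_nonneg _) (abs_cos_le_one _)).trans (hA' p)
  have c2 : |L g * DD e R p + L e * DD g R p| * |sin (l * L p)| ≤ |L g| * B + |L e| * C := by
    refine (mul_le_of_le_one_right (abs_nonneg _) (abs_sin_le_one _)).trans ?_
    refine (abs_add_le _ _).trans ?_
    simp only [abs_mul]
    gcongr
    · exact hB' p
    · exact hC' p
  gcongr

lemma RL (F : ℝ × ℝ → ℂ) (hF : Continuous F) (vF : Van F) (L : ℝ × ℝ →L[ℝ] ℝ) (hL : L ≠ 0) :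
    Tendsto (fun l : ℝ => ∫ p, F p * (cos (l * L p) : ℂ)) atTop (𝓝 0) := by
  have h0 := _root_.tendsto_integral_exp_smul_cocompact F (volume : Measure (ℝ × ℝ))
  have hn : 0 < ‖L‖ := norm_pos_iff.mpr hL
  have hc : ∀ s : ℝ, s ≠ 0 → Tendsto (fun l : ℝ => (s * l) • L) atTop
      (cocompact (StrongDual ℝ (ℝ × ℝ))) := by
    intro s hs
    have : Tendsto (fun l : ℝ => ‖(s * l) • L‖) atTop atTop := by
      simp only [norm_smul, norm_mul]
      exact ((tendsto_norm_atTop_atTop.const_mul_atTop (norm_pos_iff.mpr hs))).atTop_mul_const hn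
    rw [← Metric.cobounded_eq_cocompact]
    exact tendsto_norm_atTop_iff_cobounded.mp this
  have hp := pi_pos
  have a1 := h0.comp (hc (2*π)⁻¹ (by positivity))
  have a2 := h0.comp (hc (-(2*π)⁻¹) (by simp))
  have a3 := (a1.add a2).const_mul (1/2 : ℂ)
  simp only [add_zero, mul_zero] at a3
  refine a3.congr ?_
  intro l
  simp only [Function.comp]
  have ig : ∀ w : StrongDual ℝ (ℝ × ℝ), Integrable (fun v => fourierChar (-w v) • F v) := by
    intro w
    apply Continuous.integrable_of_hasCompactSupport
    · have := Real.continuous_fourierChar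
      fun_prop
    · apply Van.hcs
      intro p hp
      simp [vF p hp]
  rw [← integral_add (ig _) (ig _), ← integral_const_mul]
  congr 1
  funext p
  simp only [Circle.smul_def, Real.fourierChar_apply, smul_eq_mul, smul_apply]
  have e1 : (2 * π * -((2 * π)⁻¹ * l * L p)) = - (l * L p) := by field_simp
  have e2 : (2 * π * -(-(2 * π)⁻¹ * l * L p)) = (l * L p) := by field_simp
  rw [e1, e2, Complex.ofReal_cos, Complex.cos]
  push_cast
  ring

lemma Van.integrable {F : ℝ × ℝ → ℂ} (v : Van F) (hF : Continuous F) : Integrable F :=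
  hF.integrable_of_hasCompactSupport v.hcs

lemma lim3 (F0 F1 F2 : ℝ × ℝ → ℂ) (h0 : Continuous F0) (v0 : Van F0) (h1 : Continuous F1)
    (v1 : Van F1) (h2 : Continuous F2) (v2 : Van F2) (L : ℝ × ℝ →L[ℝ] ℝ) (hL : L ≠ 0) :
    Tendsto (fun l : ℝ => ∫ p, (F0 p + F1 p * (cos (l * L p) : ℂ) + F2 p * (cos (l * L p) : ℂ)^2))
      atTop (𝓝 ((∫ p, F0 p) + 1/2 * ∫ p, F2 p)) := by
  have a1 := RL F1 h1 v1 L hL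
  have a2 := (RL F2 h2 v2 L hL).comp (tendsto_id.const_mul_atTop (two_pos : (0:ℝ) < 2))
  have a3 := (a1.add (a2.const_mul (1/2 : ℂ))).const_add ((∫ p, F0 p) + 1/2 * ∫ p, F2 p)
  simp only [mul_zero, add_zero] at a3
  refine a3.congr ?_
  intro l
  simp only [Function.comp, id]
  have i1 : Integrable (fun p => F1 p * (cos (l * L p) : ℂ)) := by
    apply Van.integrable
    · intro p hp; simp [v1 p hp]
    · fun_prop
  have i2 : Integrable (fun p => F2 p * (cos (2 * l * L p) : ℂ)) := by
    apply Van.integrable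
    · intro p hp; simp [v2 p hp]
    · fun_prop
  have e : ∀ p, (F0 p + F1 p * (cos (l * L p) : ℂ) + F2 p * (cos (l * L p) : ℂ)^2) =
      ((F0 p + 1/2 * F2 p) + (F1 p * (cos (l * L p) : ℂ) + 1/2 * (F2 p * (cos (2 * l * L p) : ℂ)))) := by
    intro p
    have : cos (2 * l * L p) = 2 * cos (l * L p)^2 - 1 := by
      rw [← cos_two_mul]; ring_nf
    rw [this]
    push_cast
    ring
  simp_rw [e]
  have j0 := v0.integrable h0
  have j2 := (v2.integrable h2).const_mul (1/2 : ℂ)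
  have k2 := i2.const_mul (1/2 : ℂ)
  have s1 := integral_add (j0.add j2) (i1.add k2)
  simp only [Pi.add_apply] at s1
  rw [s1, integral_add j0 j2, integral_add i1 k2, integral_const_mul, integral_const_mul]

/-- The inductive hypothesis. -/
def Good (α : ℝ) (R0 : ℝ × ℝ → ℝ) (k : ℕ) (J I : ℂ) : Prop :=
  ∀ δ > 0, ∃ u R S : ℝ × ℝ → ℝ, ∃ ψ : ℝ × ℝ → ℂ,
    ContDiff ℝ (⊤ : ℕ∞) u ∧ ContDiff ℝ (⊤ : ℕ∞) R ∧ Continuous S ∧ Continuous ψ ∧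
    Van u ∧ Van R ∧ Van S ∧ (∀ p, 0 ≤ R p) ∧ (∫ p, R p) < 1 + δ ∧
    (∀ p, |DD (1,0) u p| < δ) ∧ (∀ p, |DD (0,1) u p| < δ) ∧
    (∀ p, |DD (1,0) (DD (1,0) u) p - (R p - R0 p)| < δ) ∧
    (∀ p, |DD (0,1) (DD (0,1) u) p - (R p - R0 p)| < δ) ∧
    (∀ p, |DD (0,1) (DD (1,0) u) p - S p| < δ) ∧
    (∀ p, ‖ψ p‖^2 ≤ (1 + α^2)^k) ∧
    ‖(∫ p, (R p : ℂ) * ψ p) - J‖ < δ ∧ ‖(∫ p, (S p : ℂ) * ψ p) - I‖ < δ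

lemma Good.step {α : ℝ} (hα : |α| ≤ 1) {R0 : ℝ × ℝ → ℝ} {k : ℕ} {J I : ℂ} (h : Good α R0 k J I)
    (σ : ℝ) (hσ : σ^2 = 1) :
    Good α R0 (k+1) ((1 + Complex.I * σ * α / 2) * J) (I + Complex.I * α / 2 * J) := by
  intro δ hδ
  obtain ⟨u, R, S, ψ, su, sR, cS, cψ, vu, vR, vS, R_nn, hR1, g1, g2, d11, d22, d12, hψ, hJ, hI⟩ :=
    h (δ/4) (by positivity)
  have hδ2 : 0 < δ/2 := by positivity
  have cR := sR.continuous
  set L : ℝ × ℝ →L[ℝ] ℝ := ContinuousLinearMap.fst ℝ ℝ ℝ + σ • ContinuousLinearMap.snd ℝ ℝ ℝ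
    with hLdef
  have L1 : L (1,0) = 1 := by simp [hLdef]
  have L2 : L (0,1) = σ := by simp [hLdef]
  have hL : L ≠ 0 := by
    intro h0
    rw [h0] at L1
    simp at L1
  have cG : Continuous (fun p => (R p : ℂ) * ψ p) := by fun_prop
  have vG : Van (fun p => (R p : ℂ) * ψ p) := fun p hp => by simp [vR p hp]
  have cH : Continuous (fun p => (S p : ℂ) * ψ p) := by fun_prop
  have vH : Van (fun p => (S p : ℂ) * ψ p) := fun p hp => by simp [vS p hp]
  have vc : ∀ (c : ℂ) {F : ℝ × ℝ → ℂ}, Van F → Van (fun p => c * F p) :=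
    fun c F hF p hp => by simp [hF p hp]
  have tJ := lim3 _ _ _ cG vG (cG.const_mul (1 + Complex.I * σ * α)) (vc _ vG)
    (cG.const_mul (Complex.I * σ * α)) (vc _ vG) L hL
  have tI := lim3 _ _ _ cH vH ((cH.const_mul (Complex.I * σ * α)).add (cG.const_mul (σ : ℂ)))
    (fun p hp => by simp [vR p hp, vS p hp])
    (cG.const_mul (Complex.I * α)) (vc _ vG) L hL
  have cRc : Continuous (fun p => (R p : ℂ)) := by fun_prop
  have vRc : Van (fun p => (R p : ℂ)) := fun p hp => by simp [vR p hp]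
  have tR := RL _ cRc vRc L hL
  obtain ⟨l, q1, q2, q11, q22, q12, qJ, qI, qR⟩ :=
    ((err1 su sR vR L (1,0) _ hδ2).and <| (err1 su sR vR L (0,1) _ hδ2).and <|
    (err2 su sR vR L (1,0) (1,0) _ hδ2).and <| (err2 su sR vR L (0,1) (0,1) _ hδ2).and <|
    (err2 su sR vR L (1,0) (0,1) _ hδ2).and <|
    (Metric.tendsto_nhds.mp tJ _ hδ2).and <| (Metric.tendsto_nhds.mp tI _ hδ2).and
    (Metric.tendsto_nhds.mp tR _ hδ2)).exists
  have hαc : ‖(α : ℂ)‖ ≤ 1 := by simpa using hα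
  have hσ1 : |σ| = 1 := by rwa [← sq_eq_sq₀ (abs_nonneg _) zero_le_one, sq_abs, one_pow]
  have hσc : ‖(σ : ℂ)‖ = 1 := by simpa using hσ1
  have hσ2 : (σ : ℂ)^2 = 1 := by exact_mod_cast hσ
  have sub : ∀ {a b c : ℝ}, |a - b| < δ/4 → |c| < δ/2 → |a - b + c| < δ := by
    intro a b c h1 h2
    have := abs_add_le (a - b) c
    linarith
  refine ⟨newU u R L l, fun p => R p * (1 + cos (l * L p)), fun p => S p + σ * (R p * cos (l * L p)),
    fun p => ψ p * (1 + Complex.I * σ * α * (cos (l * L p) : ℂ)), newU_smooth su sR L l, by fun_prop,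
    by fun_prop, by fun_prop, ?_, ?_, ?_, ?_, ?_, ?_, ?_, ?_, ?_, ?_, ?_, ?_, ?_⟩
  · intro p hp; simp [newU, vu p hp, vR p hp]
  · intro p hp; simp [vR p hp]
  · intro p hp; simp [vR p hp, vS p hp]
  · intro p
    have := neg_one_le_cos (l * L p)
    exact mul_nonneg (R_nn p) (by linarith)
  · have i1 : Integrable R := cR.integrable_of_hasCompactSupport vR.hcs
    have i2 : Integrable (fun p => R p * cos (l * L p)) := by
      apply Continuous.integrable_of_hasCompactSupport (by fun_prop)
      apply Van.hcs
      intro p hp; simp [vR p hp]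
    simp_rw [mul_add, mul_one]
    rw [integral_add i1 i2]
    have : (∫ p, (R p : ℂ) * (cos (l * L p) : ℂ)) = ((∫ p, R p * cos (l * L p) : ℝ) : ℂ) := by
      rw [← integral_complex_ofReal]
      simp
    rw [this, dist_zero_right, Complex.norm_real, Real.norm_eq_abs] at qR
    have := (abs_lt.mp qR).2
    linarith
  · intro p
    have := sub (b := 0) (by simpa using g1 p) (q1 p)
    convert this using 2; ring
  · intro p
    have := sub (b := 0) (by simpa using g2 p) (q2 p)
    convert this using 2; ring
  · intro p
    have := sub (d11 p) (q11 p)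
    rw [L1] at this
    convert this using 2; ring
  · intro p
    have := sub (d22 p) (q22 p)
    rw [L2] at this
    convert this using 2
    linear_combination (R p * cos (l * L p)) * hσ
  · intro p
    have := sub (d12 p) (q12 p)
    rw [L1, L2] at this
    convert this using 2; ring
  · intro p
    rw [norm_mul, mul_pow, pow_succ _ k]
    have : ‖1 + Complex.I * σ * α * (cos (l * L p) : ℂ)‖^2 ≤ 1 + α^2 := by
      have e : 1 + Complex.I * σ * α * (cos (l * L p) : ℂ) =
        ((1 : ℝ) : ℂ) + ((σ * α * cos (l * L p) : ℝ) : ℂ) * Complex.I := by push_cast; ring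
      rw [e, ← Complex.normSq_eq_norm_sq, Complex.normSq_add_mul_I]
      have := cos_sq_le_one (l * L p)
      have : α^2 * cos (l * L p)^2 ≤ α^2 := mul_le_of_le_one_right (sq_nonneg _) this
      rw [mul_pow, mul_pow, hσ]
      linarith
    exact mul_le_mul (hψ p) this (sq_nonneg _) (by positivity)
  · have e : (∫ p, ((R p * (1 + cos (l * L p)) : ℝ) : ℂ) * (ψ p * (1 + Complex.I * σ * α * (cos (l * L p) : ℂ))))
      = ∫ p, ((R p : ℂ) * ψ p + (1 + Complex.I * σ * α) * ((R p : ℂ) * ψ p) * (cos (l * L p) : ℂ) +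
         Complex.I * σ * α * ((R p : ℂ) * ψ p) * (cos (l * L p) : ℂ)^2) := by
      congr 1; funext p; push_cast; ring
    rw [e]
    rw [dist_eq_norm, integral_const_mul] at qJ
    set A := ∫ p, ((R p : ℂ) * ψ p + (1 + Complex.I * σ * α) * ((R p : ℂ) * ψ p) * (cos (l * L p) : ℂ) +
         Complex.I * σ * α * ((R p : ℂ) * ψ p) * (cos (l * L p) : ℂ)^2)
    set G := ∫ p, (R p : ℂ) * ψ p
    have e2 : A - (1 + Complex.I * σ * α / 2) * J =
      (A - (G + 1/2 * (Complex.I * σ * α * G))) + (1 + Complex.I * σ * α / 2) * (G - J) := by ring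
    rw [e2]
    refine (norm_add_le _ _).trans_lt ?_
    rw [norm_mul]
    have n1 : ‖1 + Complex.I * σ * α / 2‖ ≤ 2 := by
      refine (norm_add_le _ _).trans ?_
      simp only [norm_one, norm_div, norm_mul, Complex.norm_I, hσc]
      simp
      simp at hαc
      linarith
    have := mul_le_mul n1 hJ.le (norm_nonneg _) (by norm_num)
    linarith
  · have e : (∫ p, ((S p + σ * (R p * cos (l * L p)) : ℝ) : ℂ) * (ψ p * (1 + Complex.I * σ * α * (cos (l * L p) : ℂ))))
      = ∫ p, ((S p : ℂ) * ψ p + (Complex.I * σ * α * ((S p : ℂ) * ψ p) + σ * ((R p : ℂ) * ψ p)) * (cos (l * L p) : ℂ) +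
         Complex.I * α * ((R p : ℂ) * ψ p) * (cos (l * L p) : ℂ)^2) := by
      congr 1; funext p; push_cast
      linear_combination (Complex.I * α * ((R p : ℂ) * ψ p) * (Complex.cos (l * L p) : ℂ)^2) * hσ2
    rw [e]
    simp only [Pi.add_apply] at qI
    rw [dist_eq_norm, integral_const_mul] at qI
    set A := ∫ p, ((S p : ℂ) * ψ p + (Complex.I * σ * α * ((S p : ℂ) * ψ p) + σ * ((R p : ℂ) * ψ p)) * (cos (l * L p) : ℂ) +
         Complex.I * α * ((R p : ℂ) * ψ p) * (cos (l * L p) : ℂ)^2)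
    set G := ∫ p, (R p : ℂ) * ψ p
    set H := ∫ p, (S p : ℂ) * ψ p
    have e2 : A - (I + Complex.I * α / 2 * J) =
      (A - (H + 1/2 * (Complex.I * α * G))) + ((H - I) + (Complex.I * α / 2) * (G - J)) := by ring
    rw [e2]
    refine (norm_add_le _ _).trans_lt ?_
    have h3 := norm_add_le (H - I) ((Complex.I * α / 2) * (G - J))
    rw [norm_mul] at h3
    have n1 : ‖Complex.I * α / 2‖ ≤ 1 := by
      simp only [norm_div, norm_mul, Complex.norm_I]
      simp
      simp at hαc
      linarith
    have := mul_le_mul n1 hJ.le (norm_nonneg _) (by norm_num)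
    linarith

lemma exists_R0 : ∃ R0 : ℝ × ℝ → ℝ, ContDiff ℝ (⊤ : ℕ∞) R0 ∧ Van R0 ∧ (∀ p, 0 ≤ R0 p) ∧
    ∫ p, R0 p = 1 := by
  let b : ContDiffBump (0 : ℝ × ℝ) := ⟨1/4, 1/2, by norm_num, by norm_num⟩
  refine ⟨b.normed volume, b.contDiff_normed, ?_, b.nonneg_normed, b.integral_normed⟩
  intro p hp
  by_contra h
  have : p ∈ Function.support (b.normed volume) := h
  rw [b.support_normed_eq] at this
  exact hp (Metric.ball_subset_closedBall this)

lemma Good.base (α : ℝ) {R0 : ℝ × ℝ → ℝ} (h1 : ContDiff ℝ (⊤ : ℕ∞) R0) (h2 : Van R0)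
    (h3 : ∀ p, 0 ≤ R0 p) (h4 : ∫ p, R0 p = 1) : Good α R0 0 1 0 := by
  intro δ hδ
  have hz : ∀ e, DD e (fun _ => (0:ℝ)) = fun _ => 0 := by
    intro e; funext p; simp [DD]
  refine ⟨fun _ => 0, R0, fun _ => 0, fun _ => 1, contDiff_const, h1, continuous_const,
    continuous_const, fun _ _ => rfl, h2, fun _ _ => rfl, h3, by linarith, ?_⟩
  simp only [hz]
  simp [hδ, integral_complex_ofReal, h4]

lemma Good.iter {α : ℝ} (h0 : 0 ≤ α) (hα : α ≤ 1) {R0 : ℝ × ℝ → ℝ} (h : Good α R0 0 1 0) (m : ℕ) :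
    ∃ (J : ℝ) (I : ℂ), 1 ≤ J ∧ m * α ≤ I.im ∧ Good α R0 (2 * m) J I := by
  induction m with
  | zero => exact ⟨1, 0, le_rfl, by simp, by simpa using h⟩
  | succ m ih =>
    obtain ⟨J, I, hJ, hI, hG⟩ := ih
    have hα' : |α| ≤ 1 := by rwa [abs_of_nonneg h0]
    have s := (hG.step hα' 1 (by norm_num)).step hα' (-1) (by norm_num)
    refine ⟨(1 + α^2/4) * J, (I + Complex.I * ↑α / 2 * ↑J +
      Complex.I * ↑α / 2 * ((1 + Complex.I * ((1 : ℝ) : ℂ) * ↑α / 2) * ↑J)), ?_, ?_, ?_⟩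
    rotate_left 2
    · have e : (((1 + α^2/4) * J : ℝ) : ℂ) =
        (1 + Complex.I * ((-1 : ℝ) : ℂ) * ↑α / 2) * ((1 + Complex.I * ((1 : ℝ) : ℂ) * ↑α / 2) * ↑J) := by
        push_cast
        linear_combination (α:ℂ)^2 / 4 * J * Complex.I_sq
      rw [e]
      exact s
    · nlinarith [sq_nonneg α]
    · simp
      nlinarith

lemma KB_sub : KB ⊆ Set.Icc ((-1 : ℝ), (-1 : ℝ)) (1, 1) := by
  intro p hp
  simp only [KB, Metric.mem_closedBall, dist_zero_right, Prod.norm_def, sup_le_iff,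
    Real.norm_eq_abs, abs_le] at hp
  refine ⟨⟨?_, ?_⟩, ⟨?_, ?_⟩⟩ <;> simp <;> linarith

lemma notKB1 (x y : ℝ) (h : 1 ≤ |x|) : (x, y) ∉ KB := by
  simp only [KB, Metric.mem_closedBall, dist_zero_right, Prod.norm_def, sup_le_iff,
    Real.norm_eq_abs]
  rintro ⟨h1, h2⟩
  linarith

lemma notKB2 (x y : ℝ) (h : 1 ≤ |y|) : (x, y) ∉ KB := by
  simp only [KB, Metric.mem_closedBall, dist_zero_right, Prod.norm_def, sup_le_iff,
    Real.norm_eq_abs]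
  rintro ⟨h1, h2⟩
  linarith

lemma ftcY {f : ℝ × ℝ → ℝ} (hf : ContDiff ℝ (⊤ : ℕ∞) f) (v : Van f) : intY (DD (0,1) f) = f := by
  funext p
  have hc := (DD_smooth hf (0,1)).continuous
  have hd : ∀ t, HasDerivAt (fun t => f (p.1, t)) (DD (0,1) f (p.1, t)) t := by
    intro t
    exact ((smooth_diff hf) (p.1, t)).hasFDerivAt.comp_hasDerivAt t
      ((hasDerivAt_const t p.1).prodMk (hasDerivAt_id t))
  unfold intY
  rw [intervalIntegral.integral_eq_sub_of_hasDerivAt (fun t _ => hd t)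
    (Continuous.intervalIntegrable (by fun_prop) _ _), v _ (notKB2 p.1 (-1) (by simp))]
  simp

lemma ftcX {f : ℝ × ℝ → ℝ} (hf : ContDiff ℝ (⊤ : ℕ∞) f) (v : Van f) : intX (DD (1,0) f) = f := by
  funext p
  have hc := (DD_smooth hf (1,0)).continuous
  have hd : ∀ t, HasDerivAt (fun t => f (t, p.2)) (DD (1,0) f (t, p.2)) t := by
    intro t
    exact ((smooth_diff hf) (t, p.2)).hasFDerivAt.comp_hasDerivAt t
      ((hasDerivAt_id t).prodMk (hasDerivAt_const t p.2))
  unfold intX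
  rw [intervalIntegral.integral_eq_sub_of_hasDerivAt (fun t _ => hd t)
    (Continuous.intervalIntegrable (by fun_prop) _ _), v _ (notKB1 (-1) p.2 (by simp))]
  simp

lemma ind_int : Integrable (KB.indicator (fun _ => (1:ℝ))) :=
  (integrable_indicator_iff Metric.isClosed_closedBall.measurableSet).mpr
    (integrableOn_const (isCompact_closedBall _ _).measure_lt_top.ne)

lemma Van.integrableR {F : ℝ × ℝ → ℝ} (v : Van F) (hF : Continuous F) : Integrable F :=
  hF.integrable_of_hasCompactSupport v.hcs

lemma up_bound {w R R0 : ℝ × ℝ → ℝ} (cw : Continuous w) (vw : Van w) (cR : Continuous R)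
    (vR : Van R) (cR0 : Continuous R0) (vR0 : Van R0) (nR : ∀ p, 0 ≤ R p) (nR0 : ∀ p, 0 ≤ R0 p)
    (h : ∀ p, |w p - (R p - R0 p)| < 1) :
    ∫ p, |w p| ≤ (∫ p, R p) + (∫ p, R0 p) + ∫ p, KB.indicator (fun _ => (1:ℝ)) p := by
  have i1 := vR.integrableR cR
  have i2 := vR0.integrableR cR0
  have s := integral_add (i1.add i2) ind_int
  simp only [Pi.add_apply] at s
  rw [← integral_add i1 i2, ← s]
  refine integral_mono (vw.integrableR cw).abs ((i1.add i2).add ind_int) ?_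
  intro p
  simp only [Pi.add_apply]
  by_cases hp : p ∈ KB
  · simp only [Set.indicator_of_mem hp]
    have h1 := abs_lt.mp (h p)
    have := nR p
    have := nR0 p
    rw [abs_le]
    constructor <;> linarith
  · simp [vw p hp, vR p hp, vR0 p hp, Set.indicator_of_notMem hp]

lemma low_bound {q S : ℝ × ℝ → ℝ} {ψ : ℝ × ℝ → ℂ} (cq : Continuous q) (vq : Van q) (cS : Continuous S)
    (vS : Van S) (hψ : ∀ p, ‖ψ p‖ ≤ 3) (h : ∀ p, |q p - S p| < 1) :
    ‖∫ p, (S p : ℂ) * ψ p‖ ≤ 3 * ((∫ p, |q p|) + ∫ p, KB.indicator (fun _ => (1:ℝ)) p) := by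
  have i1 := (vq.integrableR cq).abs
  rw [← integral_add i1 ind_int, ← integral_const_mul]
  refine norm_integral_le_of_norm_le ((i1.add ind_int).const_mul 3) (Eventually.of_forall ?_)
  intro p
  simp only [norm_mul, Complex.norm_real, Real.norm_eq_abs]
  by_cases hp : p ∈ KB
  · simp only [Pi.add_apply, Set.indicator_of_mem hp]
    have h1 : |S p| ≤ |q p| + 1 := by
      have := abs_sub_abs_le_abs_sub (S p) (q p)
      rw [abs_sub_comm] at this
      linarith [h p]
    rw [mul_comm 3]
    exact mul_le_mul h1 (hψ p) (norm_nonneg _) (by positivity)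
  · simp [vq p hp, vS p hp, Set.indicator_of_notMem hp]

lemma exp_aux (n : ℕ) (hn : 0 < n) : (1 + ((n:ℝ)⁻¹)^2)^(2 * n^2) ≤ 3^2 := by
  have h1 : 1 + ((n:ℝ)⁻¹)^2 ≤ exp (((n:ℝ)⁻¹)^2) := by
    linarith [add_one_le_exp (((n:ℝ)⁻¹)^2)]
  calc (1 + ((n:ℝ)⁻¹)^2)^(2 * n^2) ≤ (exp (((n:ℝ)⁻¹)^2))^(2 * n^2) := by gcongr
    _ = exp 1 ^ 2 := by
      rw [← exp_nat_mul, ← exp_nat_mul]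
      congr 1
      push_cast
      field_simp
    _ ≤ 3^2 := by
      have := exp_one_lt_d9
      gcongr
      linarith

/-- For every `ε > 0` there exists a nonzero `q ∈ C_0^∞(ℝ²)` supported in `[-1,1]²`, with
all horizontal and vertical line integrals vanishing, such that
`‖∂_x q^y‖_{L¹} + ‖∂_y q^x‖_{L¹} + ‖q^x‖_∞ + ‖q^y‖_∞ < ε ‖q‖_{L¹}`. -/
theorem smoothed_ornstein_building_block (ε : ℝ) (hε : 0 < ε) :
    ∃ q : ℝ × ℝ → ℝ, ContDiff ℝ (⊤ : ℕ∞) q ∧ HasCompactSupport q ∧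
      tsupport q ⊆ Set.Icc ((-1 : ℝ), (-1 : ℝ)) (1, 1) ∧ q ≠ 0 ∧
      (∀ y₀ : ℝ, ∫ x in (-1 : ℝ)..1, q (x, y₀) = 0) ∧
      (∀ x₀ : ℝ, ∫ y in (-1 : ℝ)..1, q (x₀, y) = 0) ∧
      (∫ p, |pd1 (intY q) p|) + (∫ p, |pd2 (intX q) p|) +
          (⨆ p, |intX q p|) + (⨆ p, |intY q p|) <
        ε * ∫ p, |q p| := by
  obtain ⟨R0, sR0, vR0, nR0, iR0⟩ := exists_R0
  set V := ∫ p, KB.indicator (fun _ => (1:ℝ)) p with hV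
  have V0 : 0 ≤ V := integral_nonneg (fun p => Set.indicator_nonneg (fun _ _ => zero_le_one) p)
  obtain ⟨n, hn⟩ := exists_nat_gt (1 + 3 * (V + (2 * (3 + V) + 2) / ε))
  have hq0 : 0 ≤ (2 * (3 + V) + 2) / ε := by positivity
  have hnpos : (1:ℝ) < n := by linarith
  have hn0 : 0 < n := by exact_mod_cast (zero_lt_one.trans hnpos)
  have ha0 : 0 ≤ (n:ℝ)⁻¹ := by positivity
  have ha1 : (n:ℝ)⁻¹ ≤ 1 := inv_le_one_of_one_le₀ hnpos.le
  obtain ⟨J, I, -, hI, hG⟩ := (Good.base (n:ℝ)⁻¹ sR0 vR0 nR0 iR0).iter ha0 ha1 (n^2)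
  obtain ⟨u, R, S, ψ, su, sR, cS, cψ, vu, vR, vS, R_nn, hR1, g1, g2, d11, d22, d12, hψ, hJ', hI'⟩ :=
    hG 1 one_pos
  have hIn : (n:ℝ) ≤ ‖I‖ := by
    refine le_trans ?_ ((le_abs_self _).trans (Complex.abs_im_le_norm I))
    refine le_trans (le_of_eq ?_) hI
    push_cast
    field_simp
  have hψ3 : ∀ p, ‖ψ p‖ ≤ 3 := fun p =>
    le_of_sq_le_sq ((hψ p).trans (exp_aux n hn0)) (by norm_num)
  have sx := DD_smooth su (1,0)
  have sy := DD_smooth su (0,1)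
  have vx := vu.DD (1,0)
  have vy := vu.DD (0,1)
  have sq := DD_smooth sx (0,1)
  have vq := vx.DD (0,1)
  have eY : intY (DD (0,1) (DD (1,0) u)) = DD (1,0) u := ftcY sx vx
  have eX : intX (DD (0,1) (DD (1,0) u)) = DD (0,1) u := by
    rw [DD_comm su]; exact ftcX sy vy
  have low := low_bound sq.continuous vq cS vS hψ3 d12
  have b1 := up_bound (DD_smooth sx (1,0)).continuous (vx.DD (1,0)) sR.continuous vR
    sR0.continuous vR0 R_nn nR0 d11
  have b2 := up_bound (DD_smooth sy (0,1)).continuous (vy.DD (0,1)) sR.continuous vR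
    sR0.continuous vR0 R_nn nR0 d22
  rw [← hV] at low b1 b2
  have hlow : (n:ℝ) - 1 ≤ 3 * ((∫ p, |DD (0,1) (DD (1,0) u) p|) + V) := by
    have := norm_sub_norm_le I (∫ p, (S p : ℂ) * ψ p)
    rw [norm_sub_rev] at this
    linarith
  have hbig : (2 * (3 + V) + 2) / ε < ∫ p, |DD (0,1) (DD (1,0) u) p| := by linarith
  refine ⟨DD (0,1) (DD (1,0) u), sq, vq.hcs, vq.tsupport.trans KB_sub, ?_, ?_, ?_, ?_⟩
  · intro h0
    rw [h0] at hbig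
    simp at hbig
    linarith
  · intro y
    have := congrFun eX (1, y)
    rw [vy _ (notKB1 1 y (by simp))] at this
    exact this
  · intro x
    have := congrFun eY (x, 1)
    rw [vx _ (notKB2 x 1 (by simp))] at this
    exact this
  · rw [eX, eY]
    have c1 : (⨆ p, |DD (0,1) u p|) ≤ 1 := ciSup_le fun p => (g2 p).le
    have c2 : (⨆ p, |DD (1,0) u p|) ≤ 1 := ciSup_le fun p => (g1 p).le
    rw [div_lt_iff₀ hε] at hbig
    have p1 : (∫ p, |pd1 (DD (1,0) u) p|) = ∫ p, |DD (1,0) (DD (1,0) u) p| := rfl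
    have p2 : (∫ p, |pd2 (DD (0,1) u) p|) = ∫ p, |DD (0,1) (DD (0,1) u) p| := rfl
    rw [p1, p2]
    linarith
end
end
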